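/- Let n ≥ 8 be divisible by 4, let H be a saturated orthogonal array OA(n,n−1,2,2), and let c_{i₀} be a fixed column of H. Let X be the n × (2n−3) two-level design whose columns are the n−1 columns of H together with the n−2 interaction columns of c_{i₀} with each other column of H. Then E(s²)(X) = n²/(2n−3), and X is E(s²)-optimal: E(s²)(X) ≤ E(s²)(Y) for every n × (2n−3) balanced two-level design Y. -/

import Mathlib

open Finset

/-- The `E(s²)` value of an `n × m` two-level design `X` (columns indexed by `ι`,
`m = card ι`): the average of the squared off-diagonal entries of `XᵀX`. -/
noncomputable def Es2 {n : ℕ} {ι : Type} [Fintype ι] [DecidableEq ι]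
    (X : Fin n → ι → ℚ) : ℚ :=
  (∑ i : ι, ∑ j : ι, if i ≠ j then (∑ r : Fin n, X r i * X r j) ^ 2 else 0) /
    ((Fintype.card ι : ℚ) * ((Fintype.card ι : ℚ) - 1))

/-!
Since `XᵀX` and `XXᵀ` have the same Frobenius norm, `E(s²)` can be read off the inner products
`a` of the rows. For a balanced design the inner products of a fixed row with all rows sum to
zero, so for every `c` the value `E(s²)` is, up to a constant depending on `n`, `m` and `c` only, a
positive multiple of the sum of `(a - c) (a - (c + 2))` over pairs of distinct rows. If `c` has the
parity of `m`, then so has every `a`, and the summands are nonnegative: this gives a lower bound for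
`E(s²)`, attained when every such `a` is `c` or `c + 2`.

Bordering a saturated orthogonal array with a column of ones gives a Hadamard matrix, so distinct
rows of the array have inner product `-1`. After adding the interactions with one parent column
the inner products become `-2 ± 1`, and the bound for `c = -3` is attained.
-/

open Matrix

theorem sum_sq_colInner_eq_sum_sq_rowInner {R ρ ι : Type*} [CommSemiring R] [Fintype ρ] [Fintype ι]
    (X : ρ → ι → R) :
    ∑ i, ∑ j, (∑ r, X r i * X r j) ^ 2 = ∑ r, ∑ t, (X r ⬝ᵥ X t) ^ 2 := by
  let A : Matrix ρ ι R := of X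
  have trace_gram_left : ((Aᵀ * A) * (Aᵀ * A)).trace = ∑ i, ∑ j, (∑ r, X r i * X r j) ^ 2 := by
    simp only [A, trace, diag_apply, mul_apply, transpose_apply, of_apply, sq, mul_comm]
  have trace_gram_right : ((A * Aᵀ) * (A * Aᵀ)).trace = ∑ r, ∑ t, (X r ⬝ᵥ X t) ^ 2 := by
    simp only [A, trace, diag_apply, mul_apply, transpose_apply, of_apply, dotProduct, sq, mul_comm]
  rw [← trace_gram_left, ← trace_gram_right, Matrix.mul_assoc, trace_mul_comm,
    Matrix.mul_assoc A, Matrix.mul_assoc A, Matrix.mul_assoc Aᵀ]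

/-- A two-level design, with runs (rows) indexed by `ρ` and factors (columns) indexed by `ι`. -/
def IsTwoLevel {ρ ι : Type*} (X : ρ → ι → ℚ) : Prop :=
  ∀ r i, X r i = 1 ∨ X r i = -1

/-- A balanced design: in a two-level design, each level occurs equally often in each column. -/
def IsBalanced {ρ ι : Type*} [Fintype ρ] (X : ρ → ι → ℚ) : Prop :=
  ∀ i, ∑ r, X r i = 0

/-- A two-level orthogonal array of strength two. It is saturated when it has one row more than it
has columns. -/
structure IsOrthogonalArray {ρ κ : Type*} [Fintype ρ] (H : ρ → κ → ℚ) : Prop where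
  isTwoLevel : IsTwoLevel H
  isBalanced : IsBalanced H
  orthogonal : ∀ j k, j ≠ k → ∑ r, H r j * H r k = 0

/-- The design `H` together with the interactions of its column `p` with each other column. -/
def oneParentAugmentation {ρ κ : Type*} (H : ρ → κ → ℚ) (p : κ) : ρ → κ ⊕ {j // j ≠ p} → ℚ :=
  fun r => Sum.elim (H r) (fun j => H r p * H r j)

/-- The lower bound for the `E(s²)` value of a balanced `n × m` two-level design that comes from
the row inner products avoiding the open interval `(c, c + 2)`; here `c` is an integer with the
parity of `m`. -/
def Es2LowerBound (n m c : ℚ) : ℚ :=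
  n * ((m - c) * (m - (c + 2)) - n * (c * (c + 2) + m)) / (m * (m - 1))

theorem Es2LowerBound_two_mul_sub_three_neg_three {n : ℚ} (h₂ : n ≠ 2) (h₃ : 2 * n - 3 ≠ 0) :
    Es2LowerBound n (2 * n - 3) (-3) = n ^ 2 / (2 * n - 3) := by
  have h₄ : 2 * n - 3 - 1 ≠ 0 := fun h => h₂ (by linarith)
  rw [Es2LowerBound, div_eq_div_iff (mul_ne_zero h₃ h₄) h₃]
  ring

section RowInnerProducts

variable {ρ ι : Type*} {X : ρ → ι → ℚ}

theorem IsTwoLevel.mul_self (hX : IsTwoLevel X) (r : ρ) (i : ι) : X r i * X r i = 1 :=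
  mul_self_eq_one_iff.2 (hX r i)

theorem IsTwoLevel.mul_eq_one_or (hX : IsTwoLevel X) (r t : ρ) (i j : ι) :
    X r i * X t j = 1 ∨ X r i * X t j = -1 := by
  rcases hX r i with h | h <;> rcases hX t j with h' | h' <;> simp [h, h']

theorem IsTwoLevel.dotProduct_self [Fintype ι] (hX : IsTwoLevel X) (r : ρ) :
    X r ⬝ᵥ X r = Fintype.card ι := by
  simp [dotProduct, hX.mul_self]

theorem IsTwoLevel.exists_dotProduct_eq [Fintype ι] (hX : IsTwoLevel X) (r t : ρ) :
    ∃ k : ℤ, X r ⬝ᵥ X t = Fintype.card ι + 2 * k := by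
  have term_eq (i : ι) : ∃ k : ℤ, X r i * X t i = 1 + 2 * k := by
    rcases hX.mul_eq_one_or r t i i with h | h
    · exact ⟨0, by simp [h]⟩
    · exact ⟨-1, by norm_num [h]⟩
  choose k hk using term_eq
  exact ⟨∑ i, k i, by simp [dotProduct, hk, sum_add_distrib, mul_sum]⟩

theorem IsTwoLevel.dotProduct_sub_mul_sub_nonneg [Fintype ι] (hX : IsTwoLevel X) {c : ℤ}
    (hc : c ≡ Fintype.card ι [ZMOD 2]) (r t : ρ) :
    0 ≤ (X r ⬝ᵥ X t - c) * (X r ⬝ᵥ X t - (c + 2)) := by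
  obtain ⟨k, hk⟩ := hX.exists_dotProduct_eq r t
  obtain ⟨l, hl⟩ := hc.dvd
  have dotProduct_eq : X r ⬝ᵥ X t = c + 2 * ((l + k : ℤ) : ℚ) := by
    have card_eq : (Fintype.card ι : ℚ) - c = 2 * l := by exact_mod_cast hl
    push_cast
    linarith
  have le_sq : ((l + k : ℤ) : ℚ) ≤ ((l + k : ℤ) : ℚ) ^ 2 := by
    exact_mod_cast Int.le_self_sq (l + k)
  rw [dotProduct_eq]
  linarith

variable [Fintype ρ] [Fintype ι]

theorem IsBalanced.sum_dotProduct (hX : IsBalanced X) (v : ι → ℚ) : ∑ t, v ⬝ᵥ X t = 0 := by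
  simp only [dotProduct]
  rw [sum_comm]
  simp [← mul_sum, hX _]

theorem IsBalanced.sum_dotProduct_sub_mul_sub (hX : IsBalanced X) (v : ι → ℚ) (c d : ℚ) :
    ∑ t, (v ⬝ᵥ X t - c) * (v ⬝ᵥ X t - d) =
      ∑ t, (v ⬝ᵥ X t) ^ 2 + Fintype.card ρ * (c * d) := by
  have expand (t : ρ) : (v ⬝ᵥ X t - c) * (v ⬝ᵥ X t - d) =
      (v ⬝ᵥ X t) ^ 2 - (c + d) * (v ⬝ᵥ X t) + c * d := by ring
  simp [expand, sum_add_distrib, ← mul_sum, hX.sum_dotProduct]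

end RowInnerProducts

section LowerBound

variable {n : ℕ} {ι : Type} [Fintype ι] [DecidableEq ι] {X : Fin n → ι → ℚ}

theorem IsTwoLevel.Es2_eq (hX : IsTwoLevel X) :
    Es2 X = (∑ r, ∑ t, (X r ⬝ᵥ X t) ^ 2 - Fintype.card ι * (n : ℚ) ^ 2) /
      (Fintype.card ι * (Fintype.card ι - 1)) := by
  have off_diagonal (i j : ι) : (if i ≠ j then (∑ r, X r i * X r j) ^ 2 else 0) =
      (∑ r, X r i * X r j) ^ 2 - if i = j then (n : ℚ) ^ 2 else 0 := by
    by_cases h : i = j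
    · subst h
      simp [hX.mul_self]
    · simp [h]
  simp only [Es2, off_diagonal, sum_sub_distrib, sum_sq_colInner_eq_sum_sq_rowInner]
  simp

theorem Es2_eq_Es2LowerBound_add (hX : IsTwoLevel X) (hbal : IsBalanced X) (c : ℚ) :
    Es2 X = Es2LowerBound n (Fintype.card ι) c +
      (∑ r, ∑ t ∈ univ.erase r, (X r ⬝ᵥ X t - c) * (X r ⬝ᵥ X t - (c + 2))) /
        (Fintype.card ι * (Fintype.card ι - 1)) := by
  rw [hX.Es2_eq, Es2LowerBound, ← add_div]
  congr 1
  simp only [sum_erase_eq_sub (mem_univ _), hbal.sum_dotProduct_sub_mul_sub, hX.dotProduct_self,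
    sum_sub_distrib, sum_add_distrib, sum_const, card_univ, Fintype.card_fin, nsmul_eq_mul]
  ring

theorem Es2LowerBound_le_Es2 (hX : IsTwoLevel X) (hbal : IsBalanced X) {c : ℤ}
    (hc : c ≡ Fintype.card ι [ZMOD 2]) : Es2LowerBound n (Fintype.card ι) c ≤ Es2 X := by
  have denom_nonneg : 0 ≤ (Fintype.card ι : ℚ) * (Fintype.card ι - 1) := by
    have : (Fintype.card ι : ℚ) ≤ (Fintype.card ι : ℚ) ^ 2 := by
      exact_mod_cast Nat.le_self_pow two_ne_zero _
    linarith
  rw [Es2_eq_Es2LowerBound_add hX hbal c]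
  exact le_add_of_nonneg_right <| div_nonneg
    (sum_nonneg fun r _ => sum_nonneg fun t _ => hX.dotProduct_sub_mul_sub_nonneg hc r t)
    denom_nonneg

theorem Es2_eq_Es2LowerBound (hX : IsTwoLevel X) (hbal : IsBalanced X) {c : ℚ}
    (hrow : ∀ r t, r ≠ t → X r ⬝ᵥ X t = c ∨ X r ⬝ᵥ X t = c + 2) :
    Es2 X = Es2LowerBound n (Fintype.card ι) c := by
  have excess_eq_zero :
      ∑ r, ∑ t ∈ univ.erase r, (X r ⬝ᵥ X t - c) * (X r ⬝ᵥ X t - (c + 2)) = 0 :=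
    sum_eq_zero fun r _ => sum_eq_zero fun t ht => mul_eq_zero.2 <|
      (hrow r t (ne_of_mem_erase ht).symm).imp sub_eq_zero.2 sub_eq_zero.2
  rw [Es2_eq_Es2LowerBound_add hX hbal c, excess_eq_zero, zero_div, add_zero]

end LowerBound

section Augmentation

variable {ρ κ : Type*} {H : ρ → κ → ℚ}

theorem IsTwoLevel.oneParentAugmentation (hH : IsTwoLevel H) (p : κ) :
    IsTwoLevel (oneParentAugmentation H p) := by
  rintro r (j | j)
  · exact hH r j
  · exact hH.mul_eq_one_or r r p j

theorem IsOrthogonalArray.isBalanced_oneParentAugmentation [Fintype ρ] (hH : IsOrthogonalArray H)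
    (p : κ) : IsBalanced (oneParentAugmentation H p) := by
  rintro (j | j)
  · exact hH.isBalanced j
  · exact hH.orthogonal p j j.2.symm

variable [Fintype κ]

theorem IsOrthogonalArray.dotProduct_eq_neg_one [Fintype ρ] (hH : IsOrthogonalArray H)
    (hsat : Fintype.card κ + 1 = Fintype.card ρ) {r t : ρ} (hrt : r ≠ t) :
    H r ⬝ᵥ H t = -1 := by
  classical
  have card_ne_zero : (Fintype.card ρ : ℚ) ≠ 0 := by
    rw [← hsat]
    positivity
  let M : Matrix ρ (Option κ) ℚ := of fun r j => j.elim 1 (H r)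
  have columns_orthogonal : ((Fintype.card ρ : ℚ)⁻¹ • Mᵀ) * M = 1 := by
    rw [Matrix.smul_mul, inv_smul_eq_iff₀ card_ne_zero]
    ext (_ | j) (_ | k)
    · simp [M, mul_apply]
    · simp [M, mul_apply, hH.isBalanced k]
    · simp [M, mul_apply, hH.isBalanced j]
    · obtain rfl | hjk := eq_or_ne j k
      · simp [M, mul_apply, hH.isTwoLevel.mul_self]
      · simp [M, mul_apply, hH.orthogonal j k hjk, hjk]
  have rows_orthogonal : M * ((Fintype.card ρ : ℚ)⁻¹ • Mᵀ) = 1 :=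
    (mul_eq_one_comm_of_card_eq _ _ _ (by rw [Fintype.card_option, hsat])).1 columns_orthogonal
  rw [Matrix.mul_smul, inv_smul_eq_iff₀ card_ne_zero] at rows_orthogonal
  have border_eq : 1 + H r ⬝ᵥ H t = 0 := by
    simpa [M, mul_apply, dotProduct, hrt] using congrFun₂ rows_orthogonal r t
  linarith

variable [DecidableEq κ]

theorem card_oneParentAugmentation_add_one (p : κ) :
    Fintype.card (κ ⊕ {j // j ≠ p}) + 1 = 2 * Fintype.card κ := by
  have card_ne : Fintype.card {j // j ≠ p} = Fintype.card κ - 1 := Set.card_ne_eq p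
  have card_pos : 0 < Fintype.card κ := Fintype.card_pos_iff.2 ⟨p⟩
  rw [Fintype.card_sum, card_ne]
  omega

theorem oneParentAugmentation_dotProduct (H : ρ → κ → ℚ) (p : κ) (r t : ρ) :
    oneParentAugmentation H p r ⬝ᵥ oneParentAugmentation H p t =
      H r ⬝ᵥ H t + H r p * H t p * (H r ⬝ᵥ H t - H r p * H t p) := by
  have dotProduct_eq : H r ⬝ᵥ H t = H r p * H t p + ∑ j : {j // j ≠ p}, H r j * H t j :=
    Fintype.sum_eq_add_sum_subtype_ne (fun j => H r j * H t j) p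
  have interaction_dotProduct :
      (fun j : {j // j ≠ p} => H r p * H r j) ⬝ᵥ (fun j => H t p * H t j) =
        H r p * H t p * ∑ j : {j // j ≠ p}, H r j * H t j := by
    simp only [dotProduct, mul_sum, mul_mul_mul_comm]
  rw [oneParentAugmentation, oneParentAugmentation, sumElim_dotProduct_sumElim,
    interaction_dotProduct]
  linear_combination -(H r p * H t p) * dotProduct_eq

theorem IsOrthogonalArray.oneParentAugmentation_dotProduct_eq [Fintype ρ]
    (hH : IsOrthogonalArray H) (hsat : Fintype.card κ + 1 = Fintype.card ρ) (p : κ) {r t : ρ}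
    (hrt : r ≠ t) :
    oneParentAugmentation H p r ⬝ᵥ oneParentAugmentation H p t = -3 ∨
      oneParentAugmentation H p r ⬝ᵥ oneParentAugmentation H p t = -3 + 2 := by
  rw [oneParentAugmentation_dotProduct, hH.dotProduct_eq_neg_one hsat hrt]
  rcases hH.isTwoLevel.mul_eq_one_or r t p p with h | h <;> norm_num [h]

end Augmentation

theorem Es2_optimal_one_parent_general {n : ℕ} (hn : 3 ≤ n) {κ : Type} [Fintype κ] [DecidableEq κ]
    (hsat : Fintype.card κ + 1 = n) {H : Fin n → κ → ℚ} (hH : IsOrthogonalArray H) (p : κ) :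
    Es2 (oneParentAugmentation H p) = (n : ℚ) ^ 2 / (2 * (n : ℚ) - 3) ∧
      ∀ (ι : Type) [Fintype ι] [DecidableEq ι] (Y : Fin n → ι → ℚ),
        Fintype.card ι = 2 * n - 3 → IsTwoLevel Y → IsBalanced Y →
          Es2 (oneParentAugmentation H p) ≤ Es2 Y := by
  have cast_sub : ((2 * n - 3 : ℕ) : ℚ) = 2 * n - 3 := by
    rw [Nat.cast_sub (by omega)]
    norm_num
  have card_augmentation : Fintype.card (κ ⊕ {j // j ≠ p}) = 2 * n - 3 := by
    have := card_oneParentAugmentation_add_one p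
    omega
  have attained : Es2 (oneParentAugmentation H p) = Es2LowerBound n (2 * n - 3) (-3) := by
    rw [← cast_sub, ← card_augmentation]
    exact Es2_eq_Es2LowerBound (hH.isTwoLevel.oneParentAugmentation p)
      (hH.isBalanced_oneParentAugmentation p)
      fun r t => hH.oneParentAugmentation_dotProduct_eq (by rw [hsat, Fintype.card_fin]) p
  refine ⟨?_, fun ι _ _ Y hcard hY hbal => ?_⟩
  · have three_le : (3 : ℚ) ≤ n := by exact_mod_cast hn
    rw [attained, Es2LowerBound_two_mul_sub_three_neg_three (by linarith) (by linarith)]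
  · have parity : (-3 : ℤ) ≡ Fintype.card ι [ZMOD 2] := by
      rw [hcard, Int.ModEq]
      omega
    simpa [attained, hcard, cast_sub] using Es2LowerBound_le_Es2 hY hbal parity

/-- Augmenting a saturated `OA(n, n-1, 2, 2)` with the `n-2` interaction
columns of one fixed parent column `c_{i₀}` with each other column yields an
`n × (2n-3)` design `X` with `E(s²)(X) = n²/(2n-3)`, which is `E(s²)`-optimal among
all balanced `n × (2n-3)` two-level designs. -/
theorem Es2_optimal_one_parent (n : ℕ) (hn : 8 ≤ n) (h4 : 4 ∣ n)
    (H : Fin n → Fin (n - 1) → ℚ)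
    (hpm : ∀ i j, H i j = 1 ∨ H i j = -1)
    (hbal : ∀ j, ∑ i : Fin n, H i j = 0)
    (horth : ∀ j k : Fin (n - 1), j ≠ k → ∑ i : Fin n, H i j * H i k = 0)
    (i0 : Fin (n - 1))
    (X : Fin n → (Fin (n - 1) ⊕ {j : Fin (n - 1) // j ≠ i0}) → ℚ)
    (hX : ∀ r, X r = Sum.elim (fun j => H r j) (fun j => H r i0 * H r j.1)) :
    Es2 X = (n : ℚ) ^ 2 / (2 * (n : ℚ) - 3) ∧
      ∀ Y : Fin n → Fin (2 * n - 3) → ℚ,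
        (∀ i j, Y i j = 1 ∨ Y i j = -1) → (∀ j, ∑ i : Fin n, Y i j = 0) →
          Es2 X ≤ Es2 Y := by
  obtain rfl : X = oneParentAugmentation H i0 := funext hX
  have ⟨value, optimal⟩ := Es2_optimal_one_parent_general (by omega)
    (by rw [Fintype.card_fin]; omega) ⟨hpm, hbal, horth⟩ i0
  exact ⟨value, fun Y => optimal (Fin (2 * n - 3)) Y (Fintype.card_fin _)⟩
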